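/- Let G be a d-dimensional simplicial complex on vertex set Fin n with incidence matrix ∂ and Laplacian matrix L_G = ∂ · ∂ᵀ. Then, as an identity in ℤ[x], Σ over all quadruples (F,R,φ,φ') with (F,R) a rooted forest of G and φ, φ' fitting orientations of (F,R) of (−1)^{s(φ,φ')} · x^{|R|} = det(L_G + x·Id), where s(φ,φ') is the number of oriented strips of (φ,φ'). -/

import Mathlib

open Finset

/-- `G` is a `d`-dimensional simplicial complex on vertex set `Fin n`. -/
def IsComplex (n d : ℕ) (G : Finset (Finset (Fin n))) : Prop :=
  (∀ f ∈ G, ∀ g ⊆ f, g ∈ G) ∧ (∀ f ∈ G, f.card ≤ d + 1) ∧ ∃ f ∈ G, f.card = d + 1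

/-- The `k`-dimensional faces of `G` (faces of cardinality `k+1`). -/
def faces {n : ℕ} (G : Finset (Finset (Fin n))) (k : ℕ) : Finset (Finset (Fin n)) :=
  G.filter fun f => f.card = k + 1

/-- Incidence entry `∂[r,f]`: equals `(-1)^j` if `r` is obtained from `f` by deleting
its `j`-th smallest element (indexing from 0), and `0` if `r ⊄ f`. -/
def incEntry {n : ℕ} (r f : Finset (Fin n)) : ℤ :=
  if r ⊆ f then
    (-1 : ℤ) ^ ((f \ r).sum fun v => (f.filter fun w => w < v).card)
  else 0

/-- `F` is a forest of the `d`-dimensional complex `G`: the columns of the incidence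
matrix indexed by `F` are linearly independent over `ℚ`. -/
def IsForest (n d : ℕ) (G F : Finset (Finset (Fin n))) : Prop :=
  F ⊆ faces G d ∧
    LinearIndependent ℚ fun f : F => fun r : faces G (d - 1) => (incEntry r.1 f.1 : ℚ)

/-- `R` is a root of `F`: the rows indexed by `R̄ = G_{d-1} \ R` of the submatrix of the
incidence matrix with column set `F` are linearly independent and span the row space of
that submatrix. -/
def IsRoot (n d : ℕ) (G F R : Finset (Finset (Fin n))) : Prop :=
  R ⊆ faces G (d - 1) ∧
    LinearIndependent ℚ
      (fun r : (faces G (d - 1) \ R : Finset (Finset (Fin n))) =>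
        fun f : F => (incEntry r.1 f.1 : ℚ)) ∧
    Submodule.span ℚ
        (Set.range fun r : (faces G (d - 1) \ R : Finset (Finset (Fin n))) =>
          fun f : F => (incEntry r.1 f.1 : ℚ)) =
      Submodule.span ℚ
        (Set.range fun r : (faces G (d - 1) : Finset (Finset (Fin n))) =>
          fun f : F => (incEntry r.1 f.1 : ℚ))

/-- `(F,R)` is a rooted forest of the `d`-dimensional complex `G`. -/
def IsRootedForest (n d : ℕ) (G F R : Finset (Finset (Fin n))) : Prop :=
  IsForest n d G F ∧ IsRoot n d G F R


/-- The incidence matrix `∂` of the `d`-dimensional complex `G`. -/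
def incMatrix (n d : ℕ) (G : Finset (Finset (Fin n))) :
    Matrix (faces G (d - 1) : Finset (Finset (Fin n)))
      (faces G d : Finset (Finset (Fin n))) ℤ :=
  Matrix.of fun r f => incEntry r.1 f.1

/-- The Laplacian matrix `L_G = ∂ · ∂ᵀ`. -/
def lapMat (n d : ℕ) (G : Finset (Finset (Fin n))) :
    Matrix (faces G (d - 1) : Finset (Finset (Fin n)))
      (faces G (d - 1) : Finset (Finset (Fin n))) ℤ :=
  incMatrix n d G * (incMatrix n d G).transpose

/-!
Expanding `det (∂∂ᵀ + x·Id)` along the diagonal gives `∑ x ^ |R| · det (∂_R̄ ∂_R̄ᵀ)`, where `∂_R̄`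
consists of the rows of `∂` in `R̄`. By the Cauchy–Binet formula, `det (∂_R̄ ∂_R̄ᵀ)` is the sum over
`F` of the squares `(det ∂_{R̄,F})²`, and `(F, R)` is a rooted forest exactly when `|F| = |R̄|` and
this minor is nonzero. Expanding both determinants in `(det ∂_{R̄,F})²` gives a sum over pairs of
bijections `φ, φ' : R̄ ≃ F` of `sgn θ · ∏ ∂[r, φ r] · ∂[r, φ' r]` with `θ = φ⁻¹ ∘ φ'`, whose nonzero
terms are the pairs of fitting orientations. Such a term factors over the cycles of `θ`: a fixed
point contributes `∂[r, φ r]² = 1`, a longer cycle contributes `-1` if it is an oriented strip and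
`1` otherwise.
-/

section PrincipalMinors

variable {m R : Type*} [CommRing R]

theorem sum_powerset_eq_sum_finset_coe {M : Type*} [AddCommMonoid M] (P : Finset m)
    (g : Finset m → M) :
    ∑ S ∈ P.powerset, g S = ∑ s : Finset P, g (s.map (.subtype (· ∈ P))) := by
  classical
  refine sum_nbij' (fun S => S.subtype (· ∈ P)) (fun s => s.map (.subtype (· ∈ P)))
    (fun _ _ => mem_univ _) (fun s _ => mem_powerset.2 s.map_subtype_subset) ?_ ?_ ?_
  · exact fun S hS => subtype_map_of_mem (mem_powerset.1 hS)
  · exact fun s _ => by ext; simp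
  · exact fun S hS => by rw [subtype_map_of_mem (mem_powerset.1 hS)]

variable [DecidableEq m]

theorem det_add_diagonal_eq_sum_principal_minors [Fintype m] (M : Matrix m m R) (v : m → R) :
    (M + Matrix.diagonal v).det =
      ∑ s : Finset m, (M.submatrix (↑) (↑) : Matrix ↥sᶜ ↥sᶜ R).det * ∏ i ∈ s, v i := by
  have expand : (M + Matrix.diagonal v).det =
      ∑ s : Finset m, (Matrix.of (s.piecewise (Matrix.diagonal v) M)).det := by
    rw [add_comm]
    exact Matrix.detRowAlternating.map_add_univ (Matrix.diagonal v) M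
  have factor (s : Finset m) : Matrix.of (s.piecewise (Matrix.diagonal v) M) =
      Matrix.diagonal (s.piecewise v 1) *
        Matrix.of (sᶜ.piecewise M.row (1 : Matrix m m R).row) := by
    ext i j
    by_cases hi : i ∈ s <;> simp [Finset.piecewise, hi, Matrix.diagonal_apply, Matrix.one_apply]
  rw [expand]
  refine sum_congr rfl fun s _ => ?_
  rw [factor, Matrix.det_mul, Matrix.det_piecewise_one_eq_submatrix_det, Matrix.det_diagonal,
    prod_piecewise, univ_inter, mul_comm]
  simp

theorem det_map_C_add_X_smul_one_eq_sum_principal_minors (P : Finset m) (M : Matrix P P R) :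
    (M.map Polynomial.C + (Polynomial.X : Polynomial R) • (1 : Matrix P P (Polynomial R))).det =
      ∑ S ∈ P.powerset,
        Polynomial.C (M.submatrix (fun r : ↥(P \ S) => ⟨r, sdiff_subset r.2⟩)
          (fun r : ↥(P \ S) => ⟨r, sdiff_subset r.2⟩)).det * Polynomial.X ^ #S := by
  rw [Matrix.smul_one_eq_diagonal, det_add_diagonal_eq_sum_principal_minors,
    sum_powerset_eq_sum_finset_coe]
  refine sum_congr rfl fun s _ => ?_
  let e : ↥(P \ s.map (.subtype (· ∈ P))) ≃ ↥sᶜ :=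
    { toFun r := ⟨⟨r, sdiff_subset r.2⟩, by
        simpa [sdiff_subset r.2] using (mem_sdiff.1 r.2).2⟩
      invFun r := ⟨r, mem_sdiff.2 ⟨r.1.2, by simp [mem_compl.1 r.2]⟩⟩ }
  rw [← Matrix.det_submatrix_equiv_self e, prod_const, card_map, RingHom.map_det]
  rfl

end PrincipalMinors

section CauchyBinet

variable {ι κ β R : Type*} [Fintype ι] [DecidableEq ι] [CommRing R]

theorem sum_piFinset_eq_sum_powerset_sum_equiv {M : Type*} [AddCommMonoid M] [DecidableEq β]
    (Q : Finset β) (g : (ι → β) → M) (hg : ∀ p, ¬ Function.Injective p → g p = 0) :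
    ∑ p ∈ Fintype.piFinset fun _ => Q, g p =
      ∑ F ∈ Q.powerset, ∑ φ : ι ≃ F, g fun i => φ i := by
  have image_mem : ∀ p ∈ Fintype.piFinset fun _ : ι => Q, univ.image p ∈ Q.powerset := by
    simp [subset_iff]
  rw [← sum_fiberwise_of_maps_to image_mem]
  refine sum_congr rfl fun F hF => ?_
  replace hF := mem_powerset.1 hF
  refine (sum_of_injOn (fun (φ : ι ≃ F) i => (φ i : β)) ?_ ?_ ?_ fun _ _ => rfl).symm
  · exact fun φ _ φ' _ h => Equiv.ext fun i => Subtype.ext (congrFun h i)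
  · intro φ _
    have image_eq : univ.image (fun i => (φ i : β)) = F := by
      ext x
      simpa using ⟨fun ⟨i, hi⟩ => hi ▸ (φ i).2, fun hx => ⟨φ.symm ⟨x, hx⟩, by simp⟩⟩
    simpa [image_eq] using fun i => hF (φ i).2
  · intro p hp hp'
    obtain ⟨-, rfl⟩ := mem_filter.1 hp
    refine hg p fun hinj => hp' ?_
    have bij : Function.Bijective fun i => (⟨p i, mem_image_of_mem p (mem_univ i)⟩ :
        univ.image p) := by
      refine ⟨fun i j h => hinj (congrArg Subtype.val h), ?_⟩
      rintro ⟨x, hx⟩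
      simpa using hx
    exact ⟨Equiv.ofBijective _ bij, by simp, rfl⟩

/- The Cauchy–Binet formula with the minor of `A` expanded over bijections `φ : ι ≃ F`. The same
`φ` orders the columns of the minor of `B`, so `F` needs no ordering of its own. -/
theorem det_mul_transpose_eq_sum_equiv [DecidableEq β] (A B : Matrix ι β R) (Q : Finset β) :
    ((A.submatrix id (↑) : Matrix ι Q R) * (B.submatrix id (↑) : Matrix ι Q R).transpose).det =
      ∑ F ∈ Q.powerset, ∑ φ : ι ≃ F,
        (∏ i, A i (φ i)) * (B.submatrix id fun j => (φ j : β)).det := by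
  rw [← sum_piFinset_eq_sum_powerset_sum_equiv Q
    fun p => (∏ i, A i (p i)) * (B.submatrix id p).det]
  · have entry (i j : ι) : ((A.submatrix id (↑) : Matrix ι Q R) *
        (B.submatrix id (↑) : Matrix ι Q R).transpose) i j = ∑ f ∈ Q, A i f * B j f :=
      sum_coe_sort Q fun f => A i f * B j f
    rw [← Matrix.det_transpose]
    simp only [Matrix.det_apply', Matrix.transpose_apply, entry, prod_univ_sum, mul_sum]
    rw [sum_comm]
    refine sum_congr rfl fun p _ => sum_congr rfl fun σ _ => ?_
    simp only [prod_mul_distrib, mul_left_comm, Matrix.submatrix_apply, id]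
  · intro p hp
    obtain ⟨i, j, hij, hne⟩ := Function.not_injective_iff.1 hp
    rw [Matrix.det_zero_of_column_eq hne (by simp [hij]), mul_zero]

theorem det_submatrix_id_equiv [Fintype κ] [DecidableEq κ] (A : Matrix ι κ R) (φ : ι ≃ κ) :
    (A.submatrix id φ).det =
      ∑ φ' : ι ≃ κ, (Equiv.Perm.sign (φ'.trans φ.symm) : ℤ) * ∏ i, A i (φ' i) := by
  rw [← Matrix.det_transpose, Matrix.det_apply']
  refine Fintype.sum_equiv (Equiv.equivCongr (.refl ι) φ) _ _ fun σ => ?_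
  simp [Equiv.equivCongr, Equiv.trans_assoc]

end CauchyBinet

section OrientedStrips

variable {ι κ : Type*} [Fintype ι] [DecidableEq ι]

theorem prod_cycleFactorsFinset_prod_support {M : Type*} [CommMonoid M] (θ : Equiv.Perm ι)
    (u : ι → M) :
    ∏ c ∈ θ.cycleFactorsFinset, ∏ r ∈ c.support, u r = ∏ r ∈ θ.support, u r := by
  have support_eq : θ.support = θ.cycleFactorsFinset.biUnion Equiv.Perm.support := by
    ext i
    simp only [mem_biUnion]
    refine ⟨fun hi => ⟨θ.cycleOf i, ?_, ?_⟩, fun ⟨c, hc, hi⟩ =>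
      Equiv.Perm.mem_cycleFactorsFinset_support_le hc hi⟩
    · exact Equiv.Perm.cycleOf_mem_cycleFactorsFinset_iff.2 hi
    · exact Equiv.Perm.mem_support_cycleOf_iff.2 ⟨.refl _ _, hi⟩
  rw [support_eq, prod_biUnion]
  exact fun c hc c' hc' hne =>
    (θ.cycleFactorsFinset_pairwise_disjoint hc hc' hne).disjoint_support

theorem sign_eq_prod_cycleFactorsFinset (θ : Equiv.Perm ι) :
    Equiv.Perm.sign θ = ∏ c ∈ θ.cycleFactorsFinset, -(-1) ^ #c.support := by
  rw [Equiv.Perm.sign_of_cycleType', Equiv.Perm.cycleType_def, Multiset.map_map]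
  rfl

/- A cycle `c` contributes `-(-1) ^ #c.support * ∏ r ∈ c.support, u r` to the right-hand side,
which is `-1` exactly when the two signs agree. -/
theorem neg_one_pow_card_filter_cycleFactorsFinset (θ : Equiv.Perm ι) (u : ι → ℤˣ) :
    (-1) ^ #{c ∈ θ.cycleFactorsFinset | ∏ r ∈ c.support, u r = (-1) ^ #c.support} =
      Equiv.Perm.sign θ * ∏ r ∈ θ.support, u r := by
  have sign_rule : ∀ a b : ℤˣ, (-1) ^ (if a = b then 1 else 0) = -b * a := by decide
  rw [sign_eq_prod_cycleFactorsFinset, ← prod_cycleFactorsFinset_prod_support,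
    ← prod_mul_distrib, card_filter, ← prod_pow_eq_pow_sum]
  exact prod_congr rfl fun c _ => sign_rule _ _

/-- Fitting orientations of a matrix, for `A = ∂_{R̄,F}` the fitting orientations `R̄ ≃ F` of the
rooted forest `(F, R)`. The condition `r ⊆ φ r` on faces is encoded as `∂[r, φ r] ≠ 0`. -/
def IsFittingOrientation (A : Matrix ι κ ℤ) (φ : ι ≃ κ) : Prop :=
  ∀ r, A r (φ r) ≠ 0

/-- The oriented strips of a pair `(φ, φ')` of orientations, encoded as cycle factors of
`θ = φ⁻¹ ∘ φ'`; these correspond to the orbits of `θ` with at least two elements. -/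
def orientedStrips (A : Matrix ι κ ℤ) (φ φ' : ι ≃ κ) : Finset (Equiv.Perm ι) :=
  {c ∈ Equiv.Perm.cycleFactorsFinset (φ'.trans φ.symm) |
    ∏ r ∈ c.support, A r (φ r) * A r (φ' r) = (-1) ^ #c.support}

theorem neg_one_pow_card_orientedStrips {A : Matrix ι κ ℤ} {φ φ' : ι ≃ κ}
    (hφ : ∀ r, IsUnit (A r (φ r))) (hφ' : ∀ r, IsUnit (A r (φ' r))) :
    (-1) ^ #(orientedStrips A φ φ') =
      (∏ r, A r (φ r)) * (Equiv.Perm.sign (φ'.trans φ.symm) * ∏ r, A r (φ' r)) := by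
  choose a ha using hφ
  choose b hb using hφ'
  have h := congrArg (Units.val : ℤˣ → ℤ)
    (neg_one_pow_card_filter_cycleFactorsFinset (φ'.trans φ.symm) fun r => a r * b r)
  have prod_support : ∏ r ∈ Equiv.Perm.support (φ'.trans φ.symm), a r * b r =
      ∏ r, a r * b r := by
    refine prod_subset (subset_univ _) fun r _ hr => ?_
    have hr : φ' r = φ r := by simpa [Equiv.symm_apply_eq] using hr
    have hab : a r = b r := Units.ext (by rw [ha, hb, hr])
    rw [hab, ← sq, Int.units_sq]
  rw [prod_support] at h
  simpa [orientedStrips, Units.ext_iff, ha, hb, prod_mul_distrib, mul_left_comm] using h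

theorem sum_isFittingOrientation_neg_one_pow_card_orientedStrips [Fintype κ] [DecidableEq κ]
    {A : Matrix ι κ ℤ} (hA : ∀ r f, A r f ≠ 0 → IsUnit (A r f))
    [DecidablePred (IsFittingOrientation A)] :
    ∑ φ with IsFittingOrientation A φ, ∑ φ' with IsFittingOrientation A φ',
        (-1) ^ #(orientedStrips A φ φ') =
      ∑ φ : ι ≃ κ, (∏ r, A r (φ r)) * (A.submatrix id φ).det := by
  have fitting_of_prod_ne_zero (φ : ι ≃ κ) (h : ∏ r, A r (φ r) ≠ 0) :
      IsFittingOrientation A φ := fun r => prod_ne_zero_iff.1 h r (mem_univ r)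
  simp_rw [det_submatrix_id_equiv, Int.cast_id]
  rw [← sum_filter_of_ne (p := IsFittingOrientation A)
    fun φ _ h => fitting_of_prod_ne_zero φ (left_ne_zero_of_mul h)]
  refine sum_congr rfl fun φ hφ => ?_
  rw [← sum_filter_of_ne (p := IsFittingOrientation A)
    fun φ' _ h => fitting_of_prod_ne_zero φ' (right_ne_zero_of_mul h), mul_sum]
  refine sum_congr rfl fun φ' hφ' => ?_
  exact neg_one_pow_card_orientedStrips (fun r => hA _ _ ((mem_filter.1 hφ).2 r))
    fun r => hA _ _ ((mem_filter.1 hφ').2 r)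

end OrientedStrips

section RootedForests

variable {α β K : Type*}

/-- The submatrix `A_{S,T}` of `A` on the rows in `S` and the columns in `T`. Rows and columns are
selected by finsets of the ambient index types, so that all submatrices share the same indices. -/
def subblock (A : Matrix α β K) (S : Finset α) (T : Finset β) : Matrix S T K :=
  A.submatrix (↑) (↑)

variable [Field K]

/-- Forests of a matrix `A` with rows `P` and columns `Q`: for `A = ∂`, `P = G_{d-1}` and `Q = G_d`
these are the forests `F` of the complex `G`. -/
def IsMatrixForest (A : Matrix α β K) (P : Finset α) (Q F : Finset β) : Prop :=
  F ⊆ Q ∧ LinearIndependent K (subblock A P F).col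

variable [DecidableEq α]

/-- Roots of a column set `F` of a matrix `A` with rows `P`: for `A = ∂` and `P = G_{d-1}` these are
the roots `R` of `F`, and `P \ R` is `R̄`. -/
def IsMatrixRoot (A : Matrix α β K) (P : Finset α) (F : Finset β) (R : Finset α) : Prop :=
  R ⊆ P ∧ LinearIndependent K (subblock A (P \ R) F).row ∧
    Submodule.span K (Set.range (subblock A (P \ R) F).row) =
      Submodule.span K (Set.range (subblock A P F).row)

/-- Rooted forests of a matrix `A` with rows `P` and columns `Q`, the counterpart for matrices of
the rooted forests `(F, R)` of a complex. -/
def IsMatrixRootedForest (A : Matrix α β K) (P : Finset α) (Q F : Finset β) (R : Finset α) :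
    Prop :=
  IsMatrixForest A P Q F ∧ IsMatrixRoot A P F R

variable {A : Matrix α β K} {P R : Finset α} {Q F : Finset β} (φ : ↥(P \ R) ≃ F)

theorem isMatrixForest_of_det_ne_zero (hF : F ⊆ Q)
    (hdet : ((subblock A (P \ R) F).submatrix id φ).det ≠ 0) : IsMatrixForest A P Q F := by
  refine ⟨hF, ?_⟩
  rw [← linearIndependent_equiv φ]
  exact .of_comp (LinearMap.funLeft K K fun r : ↥(P \ R) => (⟨r, sdiff_subset r.2⟩ : P))
    (Matrix.linearIndependent_cols_of_det_ne_zero hdet)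

theorem isMatrixRoot_of_det_ne_zero (hR : R ⊆ P)
    (hdet : ((subblock A (P \ R) F).submatrix id φ).det ≠ 0) : IsMatrixRoot A P F R := by
  have rows_indep : LinearIndependent K (subblock A (P \ R) F).row :=
    .of_comp (LinearMap.funLeft K K φ) (Matrix.linearIndependent_rows_of_det_ne_zero hdet)
  have rows_span : Submodule.span K (Set.range (subblock A (P \ R) F).row) = ⊤ :=
    rows_indep.span_eq_top_of_card_eq_finrank' (by simpa using Fintype.card_congr φ)
  refine ⟨hR, rows_indep, rows_span.trans (eq_top_iff.2 ?_).symm⟩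
  rw [← rows_span]
  refine Submodule.span_mono ?_
  rintro _ ⟨r, rfl⟩
  exact ⟨⟨r, sdiff_subset r.2⟩, rfl⟩

theorem isMatrixRootedForest_of_det_ne_zero (hF : F ⊆ Q) (hR : R ⊆ P)
    (hdet : ((subblock A (P \ R) F).submatrix id φ).det ≠ 0) : IsMatrixRootedForest A P Q F R :=
  ⟨isMatrixForest_of_det_ne_zero φ hF hdet, isMatrixRoot_of_det_ne_zero φ hR hdet⟩

theorem isMatrixRootedForest_map_intCast_of_det_ne_zero [CharZero K] {A : Matrix α β ℤ}
    (hF : F ⊆ Q) (hR : R ⊆ P) (hdet : ((subblock A (P \ R) F).submatrix id φ).det ≠ 0) :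
    IsMatrixRootedForest (A.map (Int.cast : ℤ → K)) P Q F R := by
  refine isMatrixRootedForest_of_det_ne_zero φ hF hR ?_
  have h := Int.cast_ne_zero (α := K).2 hdet
  rwa [Int.cast_det] at h

end RootedForests

open scoped Classical in
theorem sum_neg_one_pow_orientedStrips_eq_det_lap_add_X_general {α β : Type*}
    [DecidableEq α] [DecidableEq β] (A : Matrix α β ℤ) (P : Finset α) (Q : Finset β)
    (hA : ∀ r ∈ P, ∀ f ∈ Q, A r f ≠ 0 → IsUnit (A r f)) :
    (∑ F ∈ Q.powerset, ∑ R ∈ P.powerset,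
        if IsMatrixRootedForest (A.map (Int.cast : ℤ → ℚ)) P Q F R then
          ∑ φ with IsFittingOrientation (subblock A (P \ R) F) φ,
            ∑ φ' with IsFittingOrientation (subblock A (P \ R) F) φ',
              Polynomial.C ((-1) ^ #(orientedStrips (subblock A (P \ R) F) φ φ')) *
                Polynomial.X ^ #R
        else 0) =
      ((subblock A P Q * (subblock A P Q).transpose).map Polynomial.C +
        (Polynomial.X : Polynomial ℤ) • (1 : Matrix P P (Polynomial ℤ))).det := by
  rw [det_map_C_add_X_smul_one_eq_sum_principal_minors, sum_comm]
  refine sum_congr rfl fun R hR => ?_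
  replace hR := mem_powerset.1 hR
  have cauchyBinet : (subblock A (P \ R) Q * (subblock A (P \ R) Q).transpose).det =
      ∑ F ∈ Q.powerset, ∑ φ : ↥(P \ R) ≃ F, (∏ r, subblock A (P \ R) F r (φ r)) *
        ((subblock A (P \ R) F).submatrix id φ).det :=
    det_mul_transpose_eq_sum_equiv (A.submatrix Subtype.val id) (A.submatrix Subtype.val id) Q
  change _ = Polynomial.C (subblock A (P \ R) Q * (subblock A (P \ R) Q).transpose).det *
    Polynomial.X ^ #R
  rw [cauchyBinet, map_sum, sum_mul]
  refine sum_congr rfl fun F hF => ?_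
  replace hF := mem_powerset.1 hF
  split_ifs with hroot
  · simp_rw [← sum_mul, ← map_sum]
    rw [sum_isFittingOrientation_neg_one_pow_card_orientedStrips (A := subblock A (P \ R) F)
      fun r f => hA r (sdiff_subset r.2) f (hF f.2)]
  · rw [sum_eq_zero, map_zero, zero_mul]
    intro φ _
    by_contra hne
    exact hroot (isMatrixRootedForest_map_intCast_of_det_ne_zero φ hF hR
      (right_ne_zero_of_mul hne))

section Incidence

variable {n : ℕ} {r f : Finset (Fin n)}

theorem isUnit_incEntry (h : r ⊆ f) : IsUnit (incEntry r f) := by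
  rw [incEntry, if_pos h]
  exact isUnit_one.neg.pow _

theorem incEntry_ne_zero_iff : incEntry r f ≠ 0 ↔ r ⊆ f :=
  ⟨fun h => by_contra fun hrf => h (if_neg hrf), fun h => (isUnit_incEntry h).ne_zero⟩

end Incidence

open scoped Classical in
/-- As an identity in `ℤ[x]`, the sum over all quadruples
`(F,R,φ,φ')`, with `(F,R)` a rooted forest of `G` and `φ, φ'` fitting orientations of
`(F,R)`, of `(−1)^{s(φ,φ')}·x^{|R|}` equals `det(L_G + x·Id)`, where `s(φ,φ')` is the
number of oriented strips of `(φ,φ')`, i.e. of orbits `C` of `θ = φ⁻¹∘φ'` with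
`|C| ≥ 2` (the cycles of `θ`) such that `Π_{r∈C} ∂[r,φ(r)]·∂[r,φ'(r)] = (−1)^{|C|}`. -/
theorem sum_neg_one_pow_orientedStrips_eq_det_lap_add_X
    (n d : ℕ) (hn : 1 ≤ n) (hd : 1 ≤ d)
    (G : Finset (Finset (Fin n))) (hG : IsComplex n d G) :
    (∑ F ∈ (faces G d).powerset, ∑ R ∈ (faces G (d - 1)).powerset,
        if IsRootedForest n d G F R then
          ∑ φ ∈ Finset.univ.filter
              (fun φ : (faces G (d - 1) \ R : Finset (Finset (Fin n))) ≃ F =>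
                ∀ r, r.1 ⊆ (φ r).1),
            ∑ φ' ∈ Finset.univ.filter
                (fun φ' : (faces G (d - 1) \ R : Finset (Finset (Fin n))) ≃ F =>
                  ∀ r, r.1 ⊆ (φ' r).1),
              Polynomial.C
                  ((-1 : ℤ) ^
                    ((Equiv.Perm.cycleFactorsFinset (φ'.trans φ.symm) |>.filter fun c =>
                        (∏ r ∈ c.support,
                          incEntry r.1 (φ r).1 * incEntry r.1 (φ' r).1) =
                          (-1 : ℤ) ^ c.support.card).card)) *
                Polynomial.X ^ R.card
        else 0) =
      Matrix.det ((lapMat n d G).map Polynomial.C +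
        (Polynomial.X : Polynomial ℤ) • (1 : Matrix _ _ (Polynomial ℤ))) := by
  simp_rw [← incEntry_ne_zero_iff]
  convert sum_neg_one_pow_orientedStrips_eq_det_lap_add_X_general incEntry (faces G (d - 1))
    (faces G d) fun r _ f _ h => isUnit_incEntry (incEntry_ne_zero_iff.1 h) <;> rfl
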